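/- arXiv:1106.4273 — 2 statements merged into one kernel-verified Lean document; each statement's English description precedes it below -/
import Mathlib

section
/- Suppose q_n ∈ ℕ and finite binary strings s_{n,i} (n ∈ ℕ, i ∈ {0,1}) and s_t (t ∈ 2^{<ω}) satisfy: (1) q_0 = 0 and, for every n, q_{n+1} equals the common length of s_t for t ∈ 2^n; (2) s_{0,0} = s_{0,1} = ∅ and, for n > 0, s_{n,0} and s_{n,1} have equal positive length; (3) s_∅ = ∅ and s_{t⌢i} = s_t ⌢ s_{lh(t)+1, i} for all t ∈ 2^{<ω} and i ∈ {0,1}; (4) for every n, 1/(n+1) ≤ Σ_{k < lh(s_{n+1,0})} |s_{n+1,0}(k) − s_{n+1,1}(k)|/(q_{n+1}+k+1) ≤ 2/(n+1). Define a : 2^ω → 2^ω by a_x = ⋃_{n∈ℕ} s_{x↾n}. Then a is continuous and, for all x, y ∈ 2^ω, Σ_{n=0}^∞ |x(n)−y(n)|/(n+1) ≤ Σ_{m=0}^∞ |a_x(m)−a_y(m)|/(m+1) ≤ 2 Σ_{n=0}^∞ |x(n)−y(n)|/(n+1); in particular x E_I y if and only if a_x E_I a_y. -/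
open scoped ENNReal

/-- The Cantor space `2^ω`. -/
abbrev Cantor : Type := ℕ → Bool

/-- The sum `Σ_n |x(n) - y(n)|/(n+1)` (computed in `[0,∞]`). -/
noncomputable def eiSum (x y : Cantor) : ℝ≥0∞ :=
  ∑' n : ℕ, if x n = y n then 0 else 1 / ((n : ℝ≥0∞) + 1)

/-- The summable-difference equivalence relation `E_I`. -/
def EI (x y : Cantor) : Prop := eiSum x y < ⊤

/-- The initial segment `x ↾ n` of `x ∈ 2^ω`, as a finite binary string. -/
def prefixOf (x : Cantor) (n : ℕ) : List Bool := (List.range n).map x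

/-- The map `x ↦ a_x = ⋃_n s_{x↾n}` determined by the assignment `t ↦ s_t`
(written `st`) of strings to strings.  (Under the hypotheses below the strings
`s_{x↾n}` form an increasing chain whose `m`-th entry is already determined by
`s_{x↾(m+1)}`, so this is the natural formal rendering of the union.) -/
def buildA (st : List Bool → List Bool) (x : Cantor) : Cantor :=
  fun m => (st (prefixOf x (m + 1))).getD m false

lemma aux_prefixOf_length (x : Cantor) (n : ℕ) : (prefixOf x n).length = n := by
  simp [prefixOf]

lemma aux_prefixOf_succ (x : Cantor) (n : ℕ) : prefixOf x (n + 1) = prefixOf x n ++ [x n] := by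
  simp [prefixOf, List.range_succ]

lemma aux_sum_blocks (f : ℕ → ℝ≥0∞) (p L : ℕ → ℕ) (p0 : p 0 = 0)
    (ps : ∀ n, p (n + 1) = p n + L n) (N : ℕ) :
    ∑ m ∈ Finset.range (p N), f m
      = ∑ n ∈ Finset.range N, ∑ k ∈ Finset.range (L n), f (p n + k) := by
  induction N with
  | zero => simp [p0]
  | succ N ih => rw [Finset.sum_range_succ, ← ih, ps, Finset.sum_range_add]

lemma aux_tsum_blocks (f : ℕ → ℝ≥0∞) (p L : ℕ → ℕ) (p0 : p 0 = 0)
    (ps : ∀ n, p (n + 1) = p n + L n) (hp : StrictMono p) :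
    ∑' m, f m = ∑' n, ∑ k ∈ Finset.range (L n), f (p n + k) := by
  have h1 := (ENNReal.tendsto_nat_tsum f).comp hp.tendsto_atTop
  have h2 := ENNReal.tendsto_nat_tsum (fun n => ∑ k ∈ Finset.range (L n), f (p n + k))
  refine tendsto_nhds_unique h1 (h2.congr fun N => ?_)
  simp [aux_sum_blocks f p L p0 ps N]

lemma aux_inv (a : ℕ) : (1 : ℝ≥0∞) / ((a : ℝ≥0∞) + 1) = ENNReal.ofReal (1 / ((a : ℝ) + 1)) := by
  rw [ENNReal.ofReal_div_of_pos (by positivity), ENNReal.ofReal_add (by positivity) (by norm_num)]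
  simp

/-- given data `q_n`, `s_{n,i}`, `s_t` satisfying conditions (1)–(4),
the map `x ↦ a_x` is continuous and satisfies
`Σ|x(n)-y(n)|/(n+1) ≤ Σ|a_x(m)-a_y(m)|/(m+1) ≤ 2 Σ|x(n)-y(n)|/(n+1)`;
in particular `x E_I y ↔ a_x E_I a_y`. -/
theorem buildA_reduction
    (q : ℕ → ℕ) (s2 : ℕ → Bool → List Bool) (st : List Bool → List Bool)
    -- (1)
    (h1a : q 0 = 0)
    (h1b : ∀ n : ℕ, ∀ t : List Bool, t.length = n → q (n + 1) = (st t).length)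
    -- (2)
    (h2a : s2 0 false = [] ∧ s2 0 true = [])
    (h2b : ∀ n : ℕ, 0 < n →
      (s2 n false).length = (s2 n true).length ∧ 0 < (s2 n false).length)
    -- (3)
    (h3a : st [] = [])
    (h3b : ∀ (t : List Bool) (i : Bool), st (t ++ [i]) = st t ++ s2 (t.length + 1) i)
    -- (4)
    (h4 : ∀ n : ℕ,
      (1 : ℝ) / (n + 1) ≤
        (∑ k ∈ Finset.range (s2 (n + 1) false).length,
          if (s2 (n + 1) false).getD k false = (s2 (n + 1) true).getD k false then (0 : ℝ)
          else 1 / ((q (n + 1) : ℝ) + (k : ℝ) + 1)) ∧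
      (∑ k ∈ Finset.range (s2 (n + 1) false).length,
          if (s2 (n + 1) false).getD k false = (s2 (n + 1) true).getD k false then (0 : ℝ)
          else 1 / ((q (n + 1) : ℝ) + (k : ℝ) + 1)) ≤ 2 / (n + 1)) :
    Continuous (buildA st) ∧
      ∀ x y : Cantor,
        eiSum x y ≤ eiSum (buildA st x) (buildA st y) ∧
        eiSum (buildA st x) (buildA st y) ≤ 2 * eiSum x y ∧
        (EI x y ↔ EI (buildA st x) (buildA st y)) := by
  have hlen : ∀ n i, (s2 (n + 1) i).length = (s2 (n + 1) false).length := by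
    intro n i
    cases i
    · rfl
    · exact (h2b (n + 1) (Nat.succ_pos n)).1.symm
  obtain ⟨p, hpq⟩ : ∃ p : ℕ → ℕ, ∀ n, p n = q (n + 1) := ⟨_, fun _ => rfl⟩
  obtain ⟨L, hL⟩ : ∃ L : ℕ → ℕ, ∀ n, L n = (s2 (n + 1) false).length := ⟨_, fun _ => rfl⟩
  have hst : ∀ x n, (st (prefixOf x n)).length = p n := fun x n => by
    rw [hpq, h1b n _ (aux_prefixOf_length x n)]
  have p0 : p 0 = 0 := by rw [hpq, h1b 0 [] rfl, h3a]; rfl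
  have hsucc : ∀ x n, st (prefixOf x (n + 1)) = st (prefixOf x n) ++ s2 (n + 1) (x n) := by
    intro x n
    rw [aux_prefixOf_succ, h3b, aux_prefixOf_length]
  have ps : ∀ n, p (n + 1) = p n + L n := by
    intro n
    rw [← hst (fun _ => false) (n + 1), hsucc, List.length_append, hst, hL]
  have Lpos : ∀ n, 0 < L n := fun n => by rw [hL]; exact (h2b _ (Nat.succ_pos n)).2
  have hp : StrictMono p := strictMono_nat_of_lt_succ fun n => by
    have := ps n; have := Lpos n; omega
  have hstab : ∀ x m n d, m < p n →
      (st (prefixOf x (n + d))).getD m false = (st (prefixOf x n)).getD m false := by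
    intro x m n d hm
    induction d with
    | zero => rfl
    | succ d ih =>
      rw [← Nat.add_assoc, hsucc, List.getD_append, ih]
      rw [hst]
      exact lt_of_lt_of_le hm (hp.monotone (Nat.le_add_right n d))
  have hA : ∀ x m n, m < p n → buildA st x m = (st (prefixOf x n)).getD m false := by
    intro x m n hm
    have hm' : m < p (m + 1) := lt_of_lt_of_le (Nat.lt_succ_self m) (hp.id_le (m + 1))
    unfold buildA
    rcases le_total n (m + 1) with h | h
    · obtain ⟨d, hd⟩ := Nat.exists_eq_add_of_le h
      rw [hd, hstab x m n d hm]
    · obtain ⟨d, hd⟩ := Nat.exists_eq_add_of_le h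
      rw [hd, hstab x m (m + 1) d hm']
  have hblock : ∀ x n k, k < L n → buildA st x (p n + k) = (s2 (n + 1) (x n)).getD k false := by
    intro x n k hk
    rw [hA x (p n + k) (n + 1) (by rw [ps]; omega), hsucc,
      List.getD_append_right _ _ _ _ (by rw [hst]; omega), hst]
    congr 1
    omega
  refine ⟨?_, ?_⟩
  · refine continuous_pi fun m => ?_
    have hfac : (fun x : Cantor => buildA st x m)
        = (fun v : Fin (m + 1) → Bool => (st (List.ofFn v)).getD m false) ∘
          (fun (x : Cantor) (i : Fin (m + 1)) => x i) := by
      funext x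
      simp only [Function.comp, buildA]
      congr 2
      apply List.ext_getElem
      · simp [prefixOf]
      · intro i h₁ h₂
        simp only [prefixOf, List.getElem_map, List.getElem_range, List.getElem_ofFn]
    rw [hfac]
    exact continuous_of_discreteTopology.comp (continuous_pi fun i => continuous_apply _)
  · intro x y
    have key : eiSum (buildA st x) (buildA st y) = ∑' n, if x n = y n then 0 else
        ENNReal.ofReal (∑ k ∈ Finset.range (s2 (n + 1) false).length,
          if (s2 (n + 1) false).getD k false = (s2 (n + 1) true).getD k false then (0 : ℝ)
          else 1 / ((q (n + 1) : ℝ) + (k : ℝ) + 1)) := by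
      unfold eiSum
      rw [aux_tsum_blocks _ p L p0 ps hp]
      refine tsum_congr fun n => ?_
      rw [ENNReal.ofReal_sum_of_nonneg (fun k _ => by split_ifs <;> positivity)]
      split_ifs with hxy
      · refine Finset.sum_eq_zero fun k hk => ?_
        have hk' := Finset.mem_range.1 hk
        rw [hblock x n k hk', hblock y n k hk', hxy, if_pos rfl]
      · rw [← hL]
        refine Finset.sum_congr rfl fun k hk => ?_
        have hk' := Finset.mem_range.1 hk
        rw [hblock x n k hk', hblock y n k hk', aux_inv, hpq]
        have hsw : ((s2 (n + 1) (x n)).getD k false = (s2 (n + 1) (y n)).getD k false) ↔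
            ((s2 (n + 1) false).getD k false = (s2 (n + 1) true).getD k false) := by
          cases hx : x n <;> cases hy : y n
          · exact absurd (hx.trans hy.symm) hxy
          · exact Iff.rfl
          · exact eq_comm
          · exact absurd (hx.trans hy.symm) hxy
        by_cases hc : (s2 (n + 1) false).getD k false = (s2 (n + 1) true).getD k false
        · rw [if_pos (hsw.2 hc), if_pos hc, ENNReal.ofReal_zero]
        · rw [if_neg (fun h => hc (hsw.1 h)), if_neg hc]
          push_cast
          rfl
    have lo : eiSum x y ≤ eiSum (buildA st x) (buildA st y) := by
      rw [key, eiSum]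
      refine ENNReal.tsum_le_tsum fun n => ?_
      split_ifs with hxy
      · exact le_rfl
      · rw [aux_inv]
        exact ENNReal.ofReal_le_ofReal (h4 n).1
    have hi : eiSum (buildA st x) (buildA st y) ≤ 2 * eiSum x y := by
      rw [key, eiSum, ← ENNReal.tsum_mul_left]
      refine ENNReal.tsum_le_tsum fun n => ?_
      split_ifs with hxy
      · exact zero_le
      · rw [aux_inv]
        refine (ENNReal.ofReal_le_ofReal (h4 n).2).trans (le_of_eq ?_)
        rw [div_eq_mul_one_div (2 : ℝ), ENNReal.ofReal_mul (by norm_num)]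
        simp
    refine ⟨lo, hi, fun h => ?_, fun h => lt_of_le_of_lt lo h⟩
    exact lt_of_le_of_lt hi (ENNReal.mul_lt_top (by simp) h)
end

section
/- The map f ↦ μ_f, sending a code f ∈ p(2^ω) to the unique Borel probability measure μ_f on 2^ω with μ_f(N_s) = f(s) for all s ∈ 2^{<ω}, is a homeomorphism from p(2^ω) (with the topology inherited from the product topology on [0,1]^{2^{<ω}}) onto the space P(2^ω) of Borel probability measures on 2^ω equipped with the topology of weak convergence. -/
open MeasureTheory

/-- The basic clopen cylinder `N_s = {x ∈ 2^ω : s ⊆ x}`. -/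
def cyl (s : List Bool) : Set Cantor :=
  {x | ∀ i : ℕ, i < s.length → x i = s.getD i false}

/-- A code for a measure: `f : 2^{<ω} → [0,1]` with `f(∅) = 1` and
`f(s) = f(s⌢0) + f(s⌢1)`. -/
def IsMeasureCode (f : List Bool → Set.Icc (0 : ℝ) 1) : Prop :=
  (f [] : ℝ) = 1 ∧
    ∀ s : List Bool, (f s : ℝ) = (f (s ++ [false]) : ℝ) + (f (s ++ [true]) : ℝ)

/-- The space `p(2^ω)` of codes, topologized as a subspace of `[0,1]^{2^{<ω}}`. -/
abbrev CodeSpace : Type := {f : List Bool → Set.Icc (0 : ℝ) 1 // IsMeasureCode f}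

theorem mem_cyl_append (s : List Bool) (b : Bool) (x : Cantor) :
    x ∈ cyl (s ++ [b]) ↔ x ∈ cyl s ∧ x s.length = b := by
  simp only [cyl, Set.mem_ofPred_eq, List.length_append, List.length_singleton]
  constructor
  · intro h
    refine ⟨fun i hi => ?_, ?_⟩
    · rw [h i (by omega), List.getD_append _ _ _ _ hi]
    · rw [h _ (by omega), List.getD_append_right _ _ _ _ le_rfl]
      simp
  · rintro ⟨h1, h2⟩ i hi
    by_cases hl : i < s.length
    · rw [h1 i hl, List.getD_append _ _ _ _ hl]
    · have : i = s.length := by omega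
      subst this
      rw [h2, List.getD_append_right _ _ _ _ le_rfl]
      simp

theorem cyl_nil : cyl [] = Set.univ := by
  ext x; simp [cyl]

theorem isClopen_cyl (s : List Bool) : IsClopen (cyl s) := by
  induction s using List.reverseRecOn with
  | nil => rw [cyl_nil]; exact isClopen_univ
  | append_singleton s b ih =>
    have : cyl (s ++ [b]) = cyl s ∩ (fun x : Cantor => x s.length) ⁻¹' {b} := by
      ext x; rw [mem_cyl_append]; rfl
    rw [this]
    exact ih.inter ((isClopen_discrete {b}).preimage (continuous_apply _))

theorem measurableSet_cyl (s : List Bool) : MeasurableSet (cyl s) :=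
  (isClopen_cyl s).isOpen.measurableSet

theorem cyl_append_subset (s r : List Bool) : cyl (s ++ r) ⊆ cyl s := by
  intro x hx i hi
  rw [hx i (by simp; omega), List.getD_append _ _ _ _ hi]

theorem disjoint_cyl (s : List Bool) : Disjoint (cyl (s ++ [false])) (cyl (s ++ [true])) := by
  rw [Set.disjoint_left]
  intro x h1 h2
  rw [mem_cyl_append] at h1 h2
  simp [h1.2] at h2

theorem cyl_split (s : List Bool) : cyl s = cyl (s ++ [false]) ∪ cyl (s ++ [true]) := by
  ext x
  simp only [Set.mem_union, mem_cyl_append]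
  cases x s.length <;> simp

theorem cyl_mono {s t : List Bool} {x : Cantor} (hs : x ∈ cyl s) (ht : x ∈ cyl t)
    (h : s.length ≤ t.length) : cyl t ⊆ cyl s := by
  intro y hy i hi
  rw [hy i (by omega), ← ht i (by omega), hs i hi]

theorem isPiSystem_cyl : IsPiSystem (Set.range cyl) := by
  rintro _ ⟨s, rfl⟩ _ ⟨t, rfl⟩ ⟨x, hs, ht⟩
  rcases le_total s.length t.length with h | h
  · exact ⟨t, (Set.inter_eq_right.2 (cyl_mono hs ht h)).symm⟩
  · exact ⟨s, (Set.inter_eq_left.2 (cyl_mono ht hs h)).symm⟩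

theorem mem_cyl_self (x : Cantor) (n : ℕ) : x ∈ cyl ((List.range n).map x) := by
  intro i hi
  simp at hi
  simp [hi]

theorem generateFrom_cyl :
    (MeasurableSpace.pi : MeasurableSpace Cantor) =
      MeasurableSpace.generateFrom (Set.range cyl) := by
  apply le_antisymm
  · refine iSup_le fun n => ?_
    rintro _ ⟨B, -, rfl⟩
    have : (fun x : Cantor => x n) ⁻¹' B =
        ⋃ (s : List Bool) (_ : s.length = n) (b : Bool) (_ : b ∈ B), cyl (s ++ [b]) := by
      ext x
      simp only [Set.mem_preimage, Set.mem_iUnion, mem_cyl_append, exists_prop]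
      constructor
      · intro h
        exact ⟨(List.range n).map x, by simp, x n, h, mem_cyl_self x n, by simp⟩
      · rintro ⟨s, rfl, b, hb, -, rfl⟩
        exact hb
    rw [this]
    refine MeasurableSet.iUnion fun s => MeasurableSet.iUnion fun _ => MeasurableSet.iUnion fun b =>
      MeasurableSet.iUnion fun _ => MeasurableSpace.measurableSet_generateFrom ⟨_, rfl⟩
  · refine MeasurableSpace.generateFrom_le ?_
    rintro _ ⟨s, rfl⟩
    exact measurableSet_cyl s

/-- The code of a probability measure. -/
noncomputable def toCode (μ : ProbabilityMeasure Cantor) : CodeSpace :=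
  ⟨fun s => ⟨(μ : Measure Cantor).real (cyl s), measureReal_nonneg, measureReal_le_one⟩, by
    constructor
    · simp [cyl_nil]
    · intro s
      simp only
      conv_lhs => rw [cyl_split s]
      exact measureReal_union (disjoint_cyl s) (measurableSet_cyl _)⟩

theorem toCode_injective : Function.Injective toCode := by
  intro μ ν h
  apply Subtype.ext
  have h1 : IsProbabilityMeasure μ.1 := μ.2
  have h2 : IsProbabilityMeasure ν.1 := ν.2
  refine ext_of_generate_finite _ generateFrom_cyl isPiSystem_cyl ?_ (by simp)
  rintro _ ⟨s, rfl⟩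
  have := congrArg (fun f : CodeSpace => (f.1 s : ℝ)) h
  exact (measureReal_eq_measureReal_iff).1 this

theorem toCode_continuous : Continuous toCode := by
  refine Continuous.subtype_mk (continuous_pi fun s => Continuous.subtype_mk ?_ _) _
  rw [continuous_iff_continuousAt]
  intro μ
  have := ProbabilityMeasure.tendsto_measure_of_null_frontier_of_tendsto'
    (μ := μ) (μs := id) (L := nhds μ) Filter.tendsto_id (E := cyl s)
    (by rw [(isClopen_cyl s).frontier_eq]; simp)
  exact (ENNReal.tendsto_toReal (measure_ne_top _ _)).comp this

/-- Discrete approximations. -/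
noncomputable def approx (f : CodeSpace) : ℕ → List Bool → Measure Cantor
  | 0, s => ENNReal.ofReal (f.1 s) • Measure.dirac (fun i => s.getD i false)
  | n + 1, s => approx f n (s ++ [false]) + approx f n (s ++ [true])

theorem approx_univ (f : CodeSpace) (n : ℕ) (s : List Bool) :
    approx f n s Set.univ = ENNReal.ofReal (f.1 s) := by
  induction n generalizing s with
  | zero => simp [approx]
  | succ n ih =>
    rw [approx, Measure.add_apply, ih, ih, f.2.2 s, ENNReal.ofReal_add] <;>
    exact (f.1 _).2.1

theorem approx_compl (f : CodeSpace) (n : ℕ) (s : List Bool) :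
    approx f n s (cyl s)ᶜ = 0 := by
  induction n generalizing s with
  | zero =>
    rw [approx, Measure.smul_apply, Measure.dirac_apply' _ (measurableSet_cyl s).compl]
    simp [cyl]
  | succ n ih =>
    rw [approx, Measure.add_apply, add_eq_zero]
    exact ⟨measure_mono_null (Set.compl_subset_compl.2 (cyl_append_subset _ _)) (ih _),
      measure_mono_null (Set.compl_subset_compl.2 (cyl_append_subset _ _)) (ih _)⟩

theorem approx_self (f : CodeSpace) (n : ℕ) (s : List Bool) :
    approx f n s (cyl s) = ENNReal.ofReal (f.1 s) := by
  rw [← approx_univ f n s, ← measure_add_measure_compl (measurableSet_cyl s), approx_compl,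
    add_zero]

theorem approx_append (f : CodeSpace) (n : ℕ) (s r : List Bool) (h : r.length ≤ n) :
    approx f n s (cyl (s ++ r)) = ENNReal.ofReal (f.1 (s ++ r)) := by
  induction n generalizing s r with
  | zero =>
    obtain rfl : r = [] := List.length_eq_zero_iff.1 (by omega)
    simpa using approx_self f 0 s
  | succ n ih =>
    cases r with
    | nil => simpa using approx_self f (n + 1) s
    | cons b r =>
      have e : s ++ b :: r = (s ++ [b]) ++ r := by simp
      rw [e, approx, Measure.add_apply]
      have hr : r.length ≤ n := by simpa using h
      have key : approx f n (s ++ [!b]) (cyl ((s ++ [b]) ++ r)) = 0 := by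
        refine measure_mono_null ?_ (approx_compl f n _)
        intro x hx hx'
        have h1 := ((mem_cyl_append _ _ _).1 (cyl_append_subset _ _ hx)).2
        have h2 := ((mem_cyl_append _ _ _).1 hx').2
        rw [h1] at h2
        cases b <;> simp at h2
      cases b
      · rw [ih _ _ hr]; simp only [Bool.not_false] at key; rw [key, add_zero]
      · rw [ih _ _ hr]; simp only [Bool.not_true] at key; rw [key, zero_add]

/-- The approximation as a probability measure. -/
noncomputable def approxP (f : CodeSpace) (n : ℕ) : ProbabilityMeasure Cantor :=
  ⟨approx f n [], ⟨by rw [approx_univ, f.2.1, ENNReal.ofReal_one]⟩⟩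

theorem toCode_approxP (f : CodeSpace) (n : ℕ) (s : List Bool) (h : s.length ≤ n) :
    (toCode (approxP f n)).1 s = f.1 s := by
  apply Subtype.ext
  have := approx_append f n [] s h
  simp only [List.nil_append] at this
  change (approx f n [] (cyl s)).toReal = _
  rw [this, ENNReal.toReal_ofReal (f.1 s).2.1]

theorem toCode_surjective : Function.Surjective toCode := by
  intro f
  have hc : IsClosed (Set.range toCode) := (isCompact_range toCode_continuous).isClosed
  change f ∈ Set.range toCode
  refine hc.mem_of_tendsto (f := fun n => toCode (approxP f n)) (b := Filter.atTop) ?_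
    (Filter.Eventually.of_forall fun n => ⟨_, rfl⟩)
  rw [tendsto_subtype_rng, tendsto_pi_nhds]
  intro s
  refine tendsto_const_nhds.congr' ?_
  filter_upwards [Filter.eventually_ge_atTop s.length] with n hn
  exact (toCode_approxP f n s hn).symm

/-- the map `f ↦ μ_f` is a homeomorphism from `p(2^ω)` onto the space
`P(2^ω)` of Borel probability measures on `2^ω` with the topology of weak convergence;
formally, there is a homeomorphism `h` such that `h(f)` assigns measure `f(s)` to the
cylinder `N_s`, for every code `f` and every string `s`. -/
theorem codeSpace_homeomorph_probabilityMeasure :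
    ∃ h : CodeSpace ≃ₜ ProbabilityMeasure Cantor,
      ∀ (f : CodeSpace) (s : List Bool),
        (h f : Measure Cantor) (cyl s) = ENNReal.ofReal (f.1 s) := by
  let e := Equiv.ofBijective toCode ⟨toCode_injective, toCode_surjective⟩
  have he : Continuous e := toCode_continuous
  refine ⟨he.homeoOfEquivCompactToT2.symm, fun f s => ?_⟩
  obtain ⟨μ, rfl⟩ := toCode_surjective f
  have : he.homeoOfEquivCompactToT2.symm (toCode μ) = μ := e.symm_apply_apply μ
  rw [this]
  exact (ofReal_measureReal).symm
end
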